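/- Let G be a finite, connected, simple graph with maximum degree at most 3, nonnegative Ricci curvature, and diameter at least 6, and let P = v_0 v_1 ⋯ v_l be a diameter path of G with l ≥ 6. If deg(v_i) = 2 for all 1 ≤ i ≤ l − 1, then either V(G) = {v_0, …, v_l} and G equals the path P, or G is isomorphic to a cycle graph C_n for some n. -/

import Mathlib

open SimpleGraph

variable {V : Type*}

/-- Combinatorial (unnormalized) graph Laplacian. -/
def lapl (G : SimpleGraph V) [G.LocallyFinite] (f : V → ℝ) (x : V) : ℝ :=
  ∑ y ∈ G.neighborFinset x, (f y - f x)

/-- Lin-Lu-Yau-Ollivier Ricci curvature (limit-free definition):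
`κ(u,v) = inf { Δf(u) − Δf(v) : f 1-Lipschitz w.r.t. graph distance, f v − f u = 1 }`. -/
noncomputable def ricci (G : SimpleGraph V) [G.LocallyFinite] (u v : V) : ℝ :=
  sInf { r : ℝ | ∃ f : V → ℝ,
    (∀ x y : V, |f x - f y| ≤ (G.dist x y : ℝ)) ∧ f v - f u = 1 ∧
    r = lapl G f u - lapl G f v }

/-- Nonnegative Ricci curvature on every edge. -/
def NonnegRicci (G : SimpleGraph V) [G.LocallyFinite] : Prop :=
  ∀ u v : V, G.Adj u v → 0 ≤ ricci G u v

/-!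
Suppose that, as seen from some `w ≠ b`, the neighbour `b` of `a` is closer than `a` and all other
neighbours of `a` are farther. Nonnegative curvature then forces `deg a ≤ deg b`: the distance `f`
to `w` has `Δf(a) = deg a - 2` and `Δf(b) ≤ deg b - 2`, and testing the curvature of the edge `ba`
on `f` gives `Δf(a) ≤ Δf(b)`.

Let `a b c d` be a geodesic with `deg b, deg c ≤ 2`. Every neighbour `y ≠ b` of `a` is at distance
three from `c`, so `w = c` gives `deg a ≤ 2`, and `y a b c` is again such a geodesic. These
geodesics therefore reach every vertex, and all degrees are at most two. If `G` contains a cycle, it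
is that cycle; otherwise it is a tree, in which an edge leaving a diameter path at one of its ends
would produce a longer geodesic.
-/

section Distance

variable {G : SimpleGraph V} {x y z w : V}

theorem forall_of_forall_adj (hconn : G.Connected) {p : V → Prop} (hx : p x)
    (hadj : ∀ y z, G.Adj y z → p y → p z) (y : V) : p y := by
  by_contra hy
  obtain ⟨q⟩ := hconn x y
  obtain ⟨e, -, hfst, hsnd⟩ := q.exists_boundary_dart {z | p z} hx hy
  exact hsnd (hadj _ _ e.adj hfst)

theorem dist_le_dist_add_one_of_adj (hconn : G.Connected) (h : G.Adj x y) (w : V) :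
    G.dist x w ≤ G.dist y w + 1 := by
  have htri := hconn.dist_triangle (u := x) (v := y) (w := w)
  rw [dist_eq_one_iff_adj.mpr h] at htri
  omega

theorem abs_dist_sub_dist_le (hconn : G.Connected) (w x y : V) :
    |(G.dist x w : ℝ) - G.dist y w| ≤ G.dist x y := by
  have hxy := hconn.dist_triangle (u := x) (v := y) (w := w)
  have hyx := hconn.dist_triangle (u := y) (v := x) (w := w)
  rw [G.dist_comm (u := y) (v := x)] at hyx
  rify at hxy hyx
  exact abs_sub_le_iff.mpr ⟨by linarith, by linarith⟩

theorem exists_adj_dist_eq (hconn : G.Connected) {n : ℕ} (h : G.dist x w = n + 1) :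
    ∃ y, G.Adj x y ∧ G.dist y w = n := by
  obtain ⟨p, hp⟩ := hconn.exists_walk_length_eq_dist x w
  cases p with
  | nil => simp at h
  | @cons _ y _ hxy q =>
    have hlower := dist_le_dist_add_one_of_adj hconn hxy w
    have hupper := dist_le q
    rw [Walk.length_cons] at hp
    exact ⟨y, hxy, by omega⟩

theorem lt_dist_of_forall_adj (hconn : G.Connected) {n : ℕ} (hne : x ≠ w)
    (h : ∀ y, G.Adj w y → n ≤ G.dist x y) : n < G.dist x w := by
  obtain ⟨m, hm⟩ := Nat.exists_eq_succ_of_ne_zero (hconn.pos_dist_of_ne hne).ne'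
  obtain ⟨y, hwy, hy⟩ := exists_adj_dist_eq hconn (G.dist_comm.trans hm)
  have := h y hwy
  rw [G.dist_comm] at hy
  omega

theorem eq_of_dist_add_one_eq_of_isAcyclic (hacyc : G.IsAcyclic) (hconn : G.Connected)
    (hxy : G.Adj x y) (hxz : G.Adj x z) (hy : G.dist y w + 1 = G.dist x w)
    (hz : G.dist z w + 1 = G.dist x w) : y = z := by
  obtain ⟨p, hp⟩ := hconn.exists_walk_length_eq_dist y w
  obtain ⟨q, hq⟩ := hconn.exists_walk_length_eq_dist z w
  have hpath_y : (p.cons hxy).IsPath := Walk.isPath_of_length_eq_dist _ (by simp [hp, hy])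
  have hpath_z : (q.cons hxz).IsPath := Walk.isPath_of_length_eq_dist _ (by simp [hq, hz])
  have heq := congrArg Subtype.val
    ((hacyc.subsingleton_path x w).elim ⟨_, hpath_y⟩ ⟨_, hpath_z⟩)
  simpa using congrArg Walk.snd heq

end Distance

section Degree

variable {G : SimpleGraph V} [G.LocallyFinite] {a b x y : V}

theorem eq_or_eq_of_adj_of_degree_le_two (hx : G.degree x ≤ 2)
    (ha : G.Adj x a) (hb : G.Adj x b) (hab : a ≠ b) (hy : G.Adj x y) : y = a ∨ y = b := by
  by_contra! hne
  have hcard : 2 < (G.neighborFinset x).card :=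
    Finset.two_lt_card.mpr ⟨y, by simpa, a, by simpa, b, by simpa, hne.1, hne.2, hab⟩
  exact hx.not_gt hcard

variable {W : Type*} {H : SimpleGraph W} [H.LocallyFinite]

theorem exists_adj_apply_eq_of_degree_le (f : Copy H G) {i : W}
    (hdeg : G.degree (f i) ≤ H.degree i) (hy : G.Adj (f i) y) : ∃ j, H.Adj i j ∧ f j = y := by
  have hcard : Fintype.card (H.neighborSet i) = Fintype.card (G.neighborSet (f i)) := by
    simpa only [card_neighborSet_eq_degree] using (f.degree_le i).antisymm hdeg
  have hbij := (Fintype.bijective_iff_injective_and_card (f.mapNeighborSet i)).mpr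
    ⟨(f.mapNeighborSet i).injective, hcard⟩
  obtain ⟨⟨j, hij⟩, hj⟩ := hbij.surjective ⟨y, hy⟩
  exact ⟨j, hij, congrArg Subtype.val hj⟩

theorem nonempty_iso_of_copy_of_degree_le [Nonempty W] (hconn : G.Connected) (f : Copy H G)
    (hdeg : ∀ i, G.degree (f i) ≤ H.degree i) : Nonempty (G ≃g H) := by
  obtain ⟨i₀⟩ := ‹Nonempty W›
  have hsurj : Function.Surjective f :=
    forall_of_forall_adj hconn (p := (· ∈ Set.range f)) ⟨i₀, rfl⟩ fun _ _ hyz ⟨i, hi⟩ =>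
      let ⟨j, _, hj⟩ := exists_adj_apply_eq_of_degree_le f (hdeg i) (hi ▸ hyz)
      ⟨j, hj⟩
  have hadj : ∀ i j, G.Adj (f i) (f j) ↔ H.Adj i j := by
    refine fun i j => ⟨fun h => ?_, f.toHom.map_adj⟩
    obtain ⟨k, hik, hkj⟩ := exists_adj_apply_eq_of_degree_le f (hdeg i) h
    rwa [f.injective hkj] at hik
  exact ⟨(RelIso.mk (Equiv.ofBijective f ⟨f.injective, hsurj⟩) (hadj _ _)).symm⟩

theorem exists_iso_cycleGraph_of_degree_le_two (hconn : G.Connected)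
    (hdeg : ∀ x, G.degree x ≤ 2) (hcyc : ¬ G.IsAcyclic) :
    ∃ n : ℕ, 3 ≤ n ∧ Nonempty (G ≃g cycleGraph n) := by
  simp only [isAcyclic_iff_free_cycleGraph, not_forall, not_free] at hcyc
  obtain ⟨n, hn, ⟨f⟩⟩ := hcyc
  obtain ⟨m, rfl⟩ := Nat.exists_eq_add_of_le' hn
  refine ⟨m + 3, hn, nonempty_iso_of_copy_of_degree_le hconn f fun i => ?_⟩
  exact cycleGraph_degree_three_le ▸ hdeg (f i)

end Degree

section Curvature

variable {G : SimpleGraph V} [G.LocallyFinite] {f : V → ℝ} {a b u v w x y : V}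

theorem abs_lapl_le_degree (hf : ∀ y, G.Adj x y → |f y - f x| ≤ 1) :
    |lapl G f x| ≤ G.degree x :=
  calc |lapl G f x| ≤ ∑ y ∈ G.neighborFinset x, |f y - f x| := Finset.abs_sum_le_sum_abs _ _
    _ ≤ (G.neighborFinset x).card • (1 : ℝ) :=
      Finset.sum_le_card_nsmul _ _ _ fun y hy => hf y ((mem_neighborFinset _ _ _).mp hy)
    _ = G.degree x := by simp

theorem lapl_eq_degree_sub_two_add_sum [DecidableEq V] (h : G.Adj x y) (hy : f y = f x - 1) :
    lapl G f x =
      G.degree x - 2 + ∑ z ∈ (G.neighborFinset x).erase y, (f z - (f x + 1)) := by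
  have hmem : y ∈ G.neighborFinset x := by simpa
  have hcard : (((G.neighborFinset x).erase y).card : ℝ) + 1 = G.degree x :=
    mod_cast Finset.card_erase_add_one hmem
  rw [lapl, ← Finset.add_sum_erase _ _ hmem, hy, ← hcard]
  simp only [Finset.sum_sub_distrib, Finset.sum_const, nsmul_eq_mul]
  ring

theorem lapl_le_degree_sub_two (h : G.Adj x y) (hy : f y = f x - 1)
    (hf : ∀ z, G.Adj x z → f z ≤ f x + 1) : lapl G f x ≤ G.degree x - 2 := by
  classical
  rw [lapl_eq_degree_sub_two_add_sum h hy, add_le_iff_nonpos_right]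
  refine Finset.sum_nonpos fun z hz => sub_nonpos.mpr (hf z ?_)
  simpa using Finset.mem_of_mem_erase hz

theorem degree_sub_two_le_lapl (h : G.Adj x y) (hy : f y = f x - 1)
    (hf : ∀ z, G.Adj x z → z ≠ y → f x + 1 ≤ f z) : G.degree x - 2 ≤ lapl G f x := by
  classical
  rw [lapl_eq_degree_sub_two_add_sum h hy, le_add_iff_nonneg_right]
  refine Finset.sum_nonneg fun z hz => sub_nonneg.mpr (hf z ?_ (Finset.ne_of_mem_erase hz))
  simpa using Finset.mem_of_mem_erase hz

theorem ricci_le_lapl_sub_lapl (hf : ∀ x y, |f x - f y| ≤ (G.dist x y : ℝ))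
    (huv : f v - f u = 1) : ricci G u v ≤ lapl G f u - lapl G f v := by
  refine csInf_le ⟨-(G.degree u + G.degree v : ℝ), ?_⟩ ⟨f, hf, huv, rfl⟩
  rintro r ⟨g, hg, -, rfl⟩
  have hlapl (x : V) : |lapl G g x| ≤ G.degree x := by
    refine abs_lapl_le_degree fun y hxy => (hg y x).trans_eq ?_
    rw [dist_eq_one_iff_adj.mpr hxy.symm, Nat.cast_one]
  linarith [neg_le_of_abs_le (hlapl u), le_of_abs_le (hlapl v)]

theorem NonnegRicci.lapl_le_lapl (hric : NonnegRicci G) (h : G.Adj u v)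
    (hf : ∀ x y, |f x - f y| ≤ (G.dist x y : ℝ)) (huv : f v - f u = 1) :
    lapl G f v ≤ lapl G f u :=
  sub_nonneg.mp ((hric u v h).trans (ricci_le_lapl_sub_lapl hf huv))

theorem NonnegRicci.degree_le_degree_of_forall_dist_lt (hric : NonnegRicci G)
    (hconn : G.Connected) (hab : G.Adj a b) (hbw : b ≠ w) (hdist : G.dist a w = G.dist b w + 1)
    (hfar : ∀ y, G.Adj a y → y ≠ b → G.dist a w < G.dist y w) : G.degree a ≤ G.degree b := by
  obtain ⟨n, hn⟩ := Nat.exists_eq_succ_of_ne_zero (hconn.pos_dist_of_ne hbw).ne'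
  obtain ⟨c, hbc, hc⟩ := exists_adj_dist_eq hconn hn
  let f : V → ℝ := fun x => G.dist x w
  have hfba : f a = f b + 1 := by simp only [f, hdist, Nat.cast_succ]
  have hfcb : f c = f b - 1 := by simp only [f, hn, hc, Nat.cast_succ, add_sub_cancel_right]
  have hlower : (G.degree a - 2 : ℝ) ≤ lapl G f a :=
    degree_sub_two_le_lapl hab (by rw [hfba, add_sub_cancel_right]) fun y hay hyb => by
      simp only [f]
      exact_mod_cast hfar y hay hyb
  have hupper : lapl G f b ≤ G.degree b - 2 :=
    lapl_le_degree_sub_two hbc hfcb fun y hby => by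
      simp only [f]
      exact_mod_cast dist_le_dist_add_one_of_adj hconn hby.symm w
  have hcurv : lapl G f a ≤ lapl G f b :=
    hric.lapl_le_lapl hab.symm (abs_dist_sub_dist_le hconn w) (by rw [hfba, add_sub_cancel_left])
  have hcast : (G.degree a : ℝ) ≤ G.degree b := by linarith
  exact_mod_cast hcast

end Curvature

/-- The geodesics of length three whose inner vertices have degree at most two: the configuration
along which nonnegative curvature propagates the degree bound. -/
structure IsThinGeodesic (G : SimpleGraph V) [G.LocallyFinite] (a b c d : V) : Prop where
  adj_left : G.Adj a b
  adj_mid : G.Adj b c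
  adj_right : G.Adj c d
  dist_eq : G.dist a d = 3
  degree_left : G.degree b ≤ 2
  degree_right : G.degree c ≤ 2

namespace IsThinGeodesic

variable {G : SimpleGraph V} [G.LocallyFinite] {a b c d y : V}

theorem symm (h : IsThinGeodesic G a b c d) : IsThinGeodesic G d c b a :=
  ⟨h.adj_right.symm, h.adj_mid.symm, h.adj_left.symm, G.dist_comm.trans h.dist_eq,
    h.degree_right, h.degree_left⟩

theorem dist_eq_two (h : IsThinGeodesic G a b c d) (hconn : G.Connected) : G.dist a c = 2 := by
  have had := h.dist_eq
  have hbc := dist_eq_one_iff_adj.mpr h.adj_mid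
  have hcd := dist_eq_one_iff_adj.mpr h.adj_right
  have hac := dist_le_dist_add_one_of_adj hconn h.adj_left c
  have htri := hconn.dist_triangle (u := a) (v := c) (w := d)
  omega

theorem eq_or_eq_of_adj (h : IsThinGeodesic G a b c d) (hconn : G.Connected) (hy : G.Adj b y) :
    y = a ∨ y = c := by
  have hac : a ≠ c := by
    rintro rfl
    simpa using h.dist_eq_two hconn
  exact eq_or_eq_of_adj_of_degree_le_two h.degree_left h.adj_left.symm h.adj_mid hac hy

theorem dist_eq_three_of_adj (h : IsThinGeodesic G a b c d) (hconn : G.Connected)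
    (hay : G.Adj a y) (hyb : y ≠ b) : G.dist y c = 3 := by
  have hac := h.dist_eq_two hconn
  have hyc : y ≠ c := by
    rintro rfl
    rw [dist_eq_one_iff_adj.mpr hay] at hac
    omega
  have hfar : ∀ z, G.Adj c z → 2 ≤ G.dist y z := by
    intro z hcz
    rcases h.symm.eq_or_eq_of_adj hconn hcz with rfl | rfl
    · have had := dist_le_dist_add_one_of_adj hconn hay z
      rw [h.dist_eq] at had
      omega
    · refine hconn.one_lt_dist_of_ne_of_not_adj hyb fun hyz => ?_
      rcases h.eq_or_eq_of_adj hconn hyz.symm with rfl | rfl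
      exacts [hay.ne rfl, hyc rfl]
  have hlower := lt_dist_of_forall_adj hconn hyc hfar
  have hupper := dist_le_dist_add_one_of_adj hconn hay.symm c
  omega

end IsThinGeodesic

namespace NonnegRicci

variable {G : SimpleGraph V} [G.LocallyFinite] {a b c d : V}

theorem degree_le_two_of_isThinGeodesic (hric : NonnegRicci G) (hconn : G.Connected)
    (h : IsThinGeodesic G a b c d) : G.degree a ≤ 2 := by
  have hac := h.dist_eq_two hconn
  have hbc := dist_eq_one_iff_adj.mpr h.adj_mid
  refine le_trans ?_ h.degree_left
  refine hric.degree_le_degree_of_forall_dist_lt hconn h.adj_left h.adj_mid.ne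
    (by omega) fun y hay hyb => ?_
  rw [hac, h.dist_eq_three_of_adj hconn hay hyb]
  omega

theorem forall_degree_le_two (hric : NonnegRicci G) (hconn : G.Connected)
    (h : IsThinGeodesic G a b c d) (x : V) : G.degree x ≤ 2 := by
  suffices hthin : ∃ a b c d, IsThinGeodesic G a b c d ∧ (x = a ∨ x = b) by
    obtain ⟨a, b, c, d, h, rfl | rfl⟩ := hthin
    exacts [hric.degree_le_two_of_isThinGeodesic hconn h, h.degree_left]
  refine forall_of_forall_adj (p := fun x => ∃ a b c d, IsThinGeodesic G a b c d ∧ (x = a ∨ x = b))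
      hconn ⟨a, b, c, d, h, .inl rfl⟩ ?_ x
  rintro x y hxy ⟨a, b, c, d, h, rfl | rfl⟩
  · by_cases hyb : y = b
    · exact ⟨x, b, c, d, h, .inr hyb⟩
    · have hx := hric.degree_le_two_of_isThinGeodesic hconn h
      exact ⟨y, x, b, c, ⟨hxy.symm, h.adj_left, h.adj_mid,
        h.dist_eq_three_of_adj hconn hxy hyb, hx, h.degree_left⟩, .inl rfl⟩
  · rcases h.eq_or_eq_of_adj hconn hxy with rfl | rfl
    exacts [⟨y, x, c, d, h, .inl rfl⟩, ⟨d, y, x, a, h.symm, .inr rfl⟩]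

end NonnegRicci

/-- The initial segment `v 0, …, v l` of a sequence of vertices is a geodesic path. Paths are
indexed by `ℕ`, the values of `v` beyond `l` being irrelevant. -/
structure IsGeodesicPath (G : SimpleGraph V) (v : ℕ → V) (l : ℕ) : Prop where
  adj : ∀ i < l, G.Adj (v i) (v (i + 1))
  dist_eq : G.dist (v 0) (v l) = l

/-- The graph `G` is nothing but the path `v 0, …, v l`, with no further vertices or edges. -/
def EqualsPath (G : SimpleGraph V) (v : ℕ → V) (l : ℕ) : Prop :=
  (∀ x : V, ∃ i ≤ l, x = v i) ∧
    (∀ x y : V, G.Adj x y ↔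
      ∃ i < l, (x = v i ∧ y = v (i + 1)) ∨ (x = v (i + 1) ∧ y = v i))

namespace IsGeodesicPath

variable {G : SimpleGraph V} {v : ℕ → V} {l : ℕ} {y : V}

theorem reverse (hv : IsGeodesicPath G v l) : IsGeodesicPath G (fun i => v (l - i)) l where
  adj i hi := by
    have h := (hv.adj (l - (i + 1)) (by omega)).symm
    rwa [show l - (i + 1) + 1 = l - i by omega] at h
  dist_eq := by
    rw [Nat.sub_self, Nat.sub_zero, G.dist_comm, hv.dist_eq]

theorem dist_add (hv : IsGeodesicPath G v l) (hconn : G.Connected) {i k : ℕ} (hik : i + k ≤ l) :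
    G.dist (v i) (v (i + k)) = k := by
  have hle : ∀ i k, i + k ≤ l → G.dist (v i) (v (i + k)) ≤ k := by
    intro i k
    induction k generalizing i with
    | zero => simp
    | succ k ih =>
      intro hik
      have hstep := dist_le_dist_add_one_of_adj hconn (hv.adj i (by omega)) (v (i + 1 + k))
      have htail := ih (i + 1) (by omega)
      rw [show i + (k + 1) = i + 1 + k by omega]
      omega
  have hstart := hle 0 i (by omega)
  have hend := hle (i + k) (l - (i + k)) (by omega)
  have hmid := hle i k hik
  rw [Nat.zero_add] at hstart
  rw [Nat.add_sub_cancel' hik] at hend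
  have htri := hconn.dist_triangle (u := v 0) (v := v i) (w := v l)
  have htri' := hconn.dist_triangle (u := v i) (v := v (i + k)) (w := v l)
  rw [hv.dist_eq] at htri
  omega

theorem isThinGeodesic [G.LocallyFinite] (hv : IsGeodesicPath G v l) (hconn : G.Connected)
    {i : ℕ} (hi : i + 3 ≤ l) (h₁ : G.degree (v (i + 1)) ≤ 2) (h₂ : G.degree (v (i + 2)) ≤ 2) :
    IsThinGeodesic G (v i) (v (i + 1)) (v (i + 2)) (v (i + 3)) :=
  ⟨hv.adj i (by omega), hv.adj (i + 1) (by omega), hv.adj (i + 2) (by omega),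
    hv.dist_add hconn hi, h₁, h₂⟩

theorem equalsPath (hv : IsGeodesicPath G v l) (hconn : G.Connected)
    (hcover : ∀ x, ∃ i ≤ l, x = v i) : EqualsPath G v l := by
  have hsucc : ∀ {i j}, i ≤ j → j ≤ l → G.Adj (v i) (v j) → j = i + 1 := by
    intro i j hij hj hadj
    obtain ⟨k, rfl⟩ := Nat.exists_eq_add_of_le hij
    rw [← dist_eq_one_iff_adj, hv.dist_add hconn hj] at hadj
    rw [hadj]
  refine ⟨hcover, fun x y => ⟨fun hxy => ?_, ?_⟩⟩
  · obtain ⟨i, hi, rfl⟩ := hcover x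
    obtain ⟨j, hj, rfl⟩ := hcover y
    rcases le_total i j with hij | hji
    · obtain rfl := hsucc hij hj hxy
      exact ⟨i, hj, .inl ⟨rfl, rfl⟩⟩
    · obtain rfl := hsucc hji hi hxy.symm
      exact ⟨j, hi, .inr ⟨rfl, rfl⟩⟩
  · rintro ⟨i, hi, ⟨rfl, rfl⟩ | ⟨rfl, rfl⟩⟩
    exacts [hv.adj i hi, (hv.adj i hi).symm]

theorem eq_or_eq_of_adj [G.LocallyFinite] (hv : IsGeodesicPath G v l) (hconn : G.Connected)
    {i : ℕ} (hi : i + 2 ≤ l) (hdeg : G.degree (v (i + 1)) ≤ 2) (hy : G.Adj (v (i + 1)) y) :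
    y = v i ∨ y = v (i + 2) := by
  refine eq_or_eq_of_adj_of_degree_le_two hdeg (hv.adj i (by omega)).symm
    (hv.adj (i + 1) (by omega)) (fun heq => ?_) hy
  have hdist := hv.dist_add hconn hi
  rw [← heq, dist_self] at hdist
  omega

theorem eq_of_adj_start (hv : IsGeodesicPath G v l) (hconn : G.Connected) (hacyc : G.IsAcyclic)
    (hdist : G.dist y (v l) ≤ l) (hy : G.Adj (v 0) y) : 0 < l ∧ y = v 1 := by
  have hcloser : G.dist y (v l) + 1 = l := by
    have hstep := hacyc.dist_eq_dist_add_one_of_adj_of_reachable (v l) hy (hconn _ _)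
    rw [G.dist_comm, hv.dist_eq, G.dist_comm] at hstep
    omega
  have hl : 1 ≤ l := by omega
  have htail := hv.dist_add hconn (i := 1) (k := l - 1) (by omega)
  rw [Nat.add_sub_cancel' hl] at htail
  refine ⟨hl, eq_of_dist_add_one_eq_of_isAcyclic hacyc hconn (w := v l) hy (hv.adj 0 hl) ?_ ?_⟩
  · rw [hcloser, hv.dist_eq]
  · rw [htail, hv.dist_eq]
    omega

theorem exists_eq_of_adj [G.LocallyFinite] (hv : IsGeodesicPath G v l) (hconn : G.Connected)
    (hacyc : G.IsAcyclic) (hdeg : ∀ x, G.degree x ≤ 2) (hdiam : ∀ x y, G.dist x y ≤ l) {i : ℕ}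
    (hi : i ≤ l) (hy : G.Adj (v i) y) : ∃ j ≤ l, y = v j := by
  rcases i with _ | i
  · obtain ⟨hl, rfl⟩ := hv.eq_of_adj_start hconn hacyc (hdiam _ _) hy
    exact ⟨1, hl, rfl⟩
  rcases hi.eq_or_lt with rfl | hil
  · obtain ⟨-, rfl⟩ := hv.reverse.eq_of_adj_start hconn hacyc (hdiam _ _) hy
    exact ⟨i, by omega, rfl⟩
  · rcases hv.eq_or_eq_of_adj hconn hil (hdeg _) hy with rfl | rfl
    exacts [⟨i, by omega, rfl⟩, ⟨i + 2, hil, rfl⟩]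

theorem equalsPath_or_iso_cycleGraph [G.LocallyFinite] (hv : IsGeodesicPath G v l)
    (hconn : G.Connected) (hdeg : ∀ x, G.degree x ≤ 2) (hdiam : ∀ x y, G.dist x y ≤ l) :
    EqualsPath G v l ∨ ∃ n : ℕ, 3 ≤ n ∧ Nonempty (G ≃g cycleGraph n) := by
  by_cases hacyc : G.IsAcyclic
  · have hcover := forall_of_forall_adj hconn (p := fun x => ∃ i ≤ l, x = v i) ⟨0, l.zero_le, rfl⟩
      fun _ _ hxy ⟨_, hi, hx⟩ =>
        hv.exists_eq_of_adj hconn hacyc hdeg hdiam hi (hx ▸ hxy)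
    exact .inl (hv.equalsPath hconn hcover)
  · exact .inr (exists_iso_cycleGraph_of_degree_le_two hconn hdeg hacyc)

end IsGeodesicPath

theorem diameter_path_interior_degree_two_general (G : SimpleGraph V) [G.LocallyFinite]
    (hconn : G.Connected) (hric : NonnegRicci G) {l : ℕ} {v : ℕ → V} (hv : IsGeodesicPath G v l)
    (hdiam : ∀ x y : V, G.dist x y ≤ l) {i : ℕ} (hi : i + 3 ≤ l)
    (h₁ : G.degree (v (i + 1)) ≤ 2) (h₂ : G.degree (v (i + 2)) ≤ 2) :
    EqualsPath G v l ∨ ∃ n : ℕ, 3 ≤ n ∧ Nonempty (G ≃g cycleGraph n) :=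
  hv.equalsPath_or_iso_cycleGraph hconn
    (hric.forall_degree_le_two hconn (hv.isThinGeodesic hconn hi h₁ h₂)) hdiam

/-- Let `P = v 0, …, v l` (`l ≥ 6`) be a diameter path of a finite,
connected simple graph `G` with maximum degree at most 3 and nonnegative Ricci curvature.
If all interior vertices of `P` have degree 2, then `G` is the path `P` itself or `G` is
isomorphic to a cycle graph. -/
theorem diameter_path_interior_degree_two (G : SimpleGraph V) [Fintype V] [G.LocallyFinite]
    (hconn : G.Connected) (hdeg : ∀ x : V, G.degree x ≤ 3) (hric : NonnegRicci G)
    (l : ℕ) (hl : 6 ≤ l) (v : ℕ → V)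
    (hadj : ∀ i < l, G.Adj (v i) (v (i + 1)))
    (hinj : ∀ i ≤ l, ∀ j ≤ l, v i = v j → i = j)
    (hgeo : G.dist (v 0) (v l) = l)
    (hdiam : ∀ x y : V, G.dist x y ≤ l)
    (hdeg2 : ∀ i : ℕ, 1 ≤ i → i ≤ l - 1 → G.degree (v i) = 2) :
    ((∀ x : V, ∃ i ≤ l, x = v i) ∧
      (∀ x y : V, G.Adj x y ↔
        ∃ i < l, (x = v i ∧ y = v (i + 1)) ∨ (x = v (i + 1) ∧ y = v i))) ∨
      (∃ n : ℕ, 3 ≤ n ∧ Nonempty (G ≃g cycleGraph n)) := by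
  exact diameter_path_interior_degree_two_general G hconn hric ⟨hadj, hgeo⟩ hdiam
    (i := 0) (by omega) (hdeg2 1 (by omega) (by omega)).le
    (hdeg2 2 (by omega) (by omega)).le
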